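/- arXiv:2410.02418 — 3 statements merged into one kernel-verified Lean document; each statement's English description precedes it below -/
import Mathlib

section
/- Let β = i − 1 and D = {0, 1, −1, i, −i}. Let Q = {0, ±1, ±i, ±1±i, ±2, ±2i, ±1±2i, ±2±i} ⊂ ℤ[i] (21 elements). If w ∈ Q + D and w ∉ βQ, then for every pair b, c ∈ D there exists a unique pair (d, q') with d ∈ D \ {0} and q' ∈ Q such that w + bβ + cβ² = d + β³q'. -/
/-!
Write `Oct(m, n)` for the set of Gaussian integers with `|re|, |im| ≤ m` and `|re| + |im| ≤ n`.
Then `D = Oct(1, 1)` and `Q = Oct(2, 3)`, these octagons add up under Minkowski sums, and since `β`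
rotates by 135° and scales by `√2`, `βz ∈ Oct(n, 2m)` if and only if `z ∈ Oct(m, n)`.
Hence `Q + D ⊆ Oct(3, 4)` and `βQ` consists of the multiples of `β` in `Oct(3, 4)`, so `w ∉ βQ`
means `β ∤ w`; then `re w + im w` is odd, which improves `w ∈ Oct(3, 4)` to `w ∈ Oct(3, 3)`.

Now `x = w + bβ + cβ²` is prime to `β` and lies in `Oct(3 + 1 + 2, 3 + 2 + 2) = Oct(6, 7)`. The
residues modulo `β³` prime to `β` are represented exactly once by `1, -1, i, -i`, which determines
`d`. Finally `x - d = β³q'` lies in `Oct(7, 8)`, hence in `Oct(6, 8)` because its coordinates are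
even, and this says `q' ∈ Oct(2, 3) = Q`.
-/

open Matrix

noncomputable section

/-- The imaginary unit `i` in the Gaussian integers. -/
def gI : GaussianInt := ⟨0, 1⟩

/-- The base `β = i - 1`. -/
def gβ : GaussianInt := ⟨-1, 1⟩

/-- The digit set `D = {0, 1, -1, i, -i}`. -/
def gD : Set GaussianInt := {0, 1, -1, gI, -gI}

/-- Value of a digit string `d_{n-1} ⋯ d_0`, given as a list with the least
significant digit first: `gval [d_0, d_1, …, d_{n-1}] = Σ d_j β^j`. -/
def gval (l : List GaussianInt) : GaussianInt :=
  l.foldr (fun d acc => d + gβ * acc) 0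

/-- `l` (least significant digit first) is a `(β, D)`-representation of `x`. -/
def gIsRep (x : GaussianInt) (l : List GaussianInt) : Prop :=
  (∀ d ∈ l, d ∈ gD) ∧ gval l = x

/-- A representation is normalized if it is empty or its leading digit
(the last entry of the LSD-first list) is nonzero. -/
def gNormalized (l : List GaussianInt) : Prop := l.getLast? ≠ some 0

/-- Number of nonzero digits (Hamming weight). -/
def gweight (l : List GaussianInt) : ℕ := (l.filter (fun d => d ≠ 0)).length

/-- The set `Q` of 21 states. -/
def Qset : Set GaussianInt :=
  {0, 1, -1, gI, -gI, 1 + gI, 1 - gI, -1 + gI, -1 - gI,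
   2, -2, 2 * gI, -2 * gI, 1 + 2 * gI, 1 - 2 * gI, -1 + 2 * gI, -1 - 2 * gI,
   2 + gI, 2 - gI, -2 + gI, -2 - gI}

/-- The Gaussian integers in the octagon `|re| ≤ m`, `|im| ≤ m`, `|re| + |im| ≤ n`, which serves
as a common description of `D` and `Q`. The last inequality is encoded by the two diagonal strips
`|re + im| ≤ n` and `|re - im| ≤ n`, which multiplication by `β` exchanges with the axis-parallel
ones. -/
def octagon (m n : ℤ) : Set GaussianInt :=
  {z | |z.re| ≤ m ∧ |z.im| ≤ m ∧ |z.re + z.im| ≤ n ∧ |z.re - z.im| ≤ n}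

section

variable {m n m' n' k : ℤ} {w x z b c d d' q q' : GaussianInt}

theorem mem_octagon :
    z ∈ octagon m n ↔ |z.re| ≤ m ∧ |z.im| ≤ m ∧ |z.re + z.im| ≤ n ∧ |z.re - z.im| ≤ n :=
  Iff.rfl

theorem add_mem_octagon (hz : z ∈ octagon m n) (hw : w ∈ octagon m' n') :
    z + w ∈ octagon (m + m') (n + n') := by
  simp only [mem_octagon, abs_le, Zsqrtd.re_add, Zsqrtd.im_add] at *
  omega

theorem neg_mem_octagon (hz : z ∈ octagon m n) : -z ∈ octagon m n := by
  simp only [mem_octagon, abs_le, Zsqrtd.re_neg, Zsqrtd.im_neg] at *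
  omega

theorem sub_mem_octagon (hz : z ∈ octagon m n) (hw : w ∈ octagon m' n') :
    z - w ∈ octagon (m + m') (n + n') :=
  sub_eq_add_neg z w ▸ add_mem_octagon hz (neg_mem_octagon hw)

theorem gD_eq_octagon : gD = octagon 1 1 := by
  ext ⟨x, y⟩
  simp only [gD, gI, mem_octagon, abs_le, Set.mem_insert_iff, Set.mem_singleton_iff,
    Zsqrtd.ext_iff, Zsqrtd.re_zero, Zsqrtd.im_zero, Zsqrtd.re_one, Zsqrtd.im_one, Zsqrtd.re_neg,
    Zsqrtd.im_neg]
  omega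

theorem Qset_eq_octagon : Qset = octagon 2 3 := by
  ext ⟨x, y⟩
  simp only [Qset, gI, mem_octagon, abs_le, Set.mem_insert_iff, Set.mem_singleton_iff,
    Zsqrtd.ext_iff, Zsqrtd.re_zero, Zsqrtd.im_zero, Zsqrtd.re_one, Zsqrtd.im_one, Zsqrtd.re_neg,
    Zsqrtd.im_neg, Zsqrtd.re_add, Zsqrtd.im_add, Zsqrtd.re_sub, Zsqrtd.im_sub, Zsqrtd.re_mul,
    Zsqrtd.im_mul, Zsqrtd.re_ofNat, Zsqrtd.im_ofNat]
  constructor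
  · omega
  · rintro ⟨⟨hx, hx'⟩, ⟨hy, hy'⟩, hdiag⟩
    interval_cases x <;> interval_cases y <;> simp at hdiag ⊢

theorem re_gβ_mul (z : GaussianInt) : (gβ * z).re = -(z.re + z.im) := by
  simp only [gβ, Zsqrtd.re_mul]
  ring

theorem im_gβ_mul (z : GaussianInt) : (gβ * z).im = z.re - z.im := by
  simp only [gβ, Zsqrtd.im_mul]
  ring

theorem gβ_ne_zero : gβ ≠ 0 := by
  simp [gβ, Zsqrtd.ext_iff]

theorem gβ_mul_mem_octagon_iff : gβ * z ∈ octagon n (2 * m) ↔ z ∈ octagon m n := by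
  simp only [mem_octagon, re_gβ_mul, im_gβ_mul, abs_le]
  omega

theorem gβ_sq_mul_mem_octagon_iff : gβ ^ 2 * z ∈ octagon (2 * m) (2 * n) ↔ z ∈ octagon m n := by
  rw [sq, mul_assoc, gβ_mul_mem_octagon_iff, gβ_mul_mem_octagon_iff]

theorem gβ_dvd_iff : gβ ∣ z ↔ 2 ∣ z.re + z.im := by
  constructor
  · rintro ⟨q, rfl⟩
    rw [re_gβ_mul, im_gβ_mul]
    omega
  · intro h
    refine ⟨⟨(z.im - z.re) / 2, -(z.re + z.im) / 2⟩, ?_⟩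
    rw [Zsqrtd.ext_iff, re_gβ_mul, im_gβ_mul]
    dsimp only
    omega

theorem gβ_pow_three_dvd_iff : gβ ^ 3 ∣ z ↔ 4 ∣ z.re + z.im ∧ 4 ∣ z.re - z.im := by
  have mul_re (q : GaussianInt) : (gβ ^ 3 * q).re = 2 * (q.re - q.im) := by
    simp only [pow_succ, pow_zero, one_mul, mul_assoc, re_gβ_mul, im_gβ_mul]
    ring
  have mul_im (q : GaussianInt) : (gβ ^ 3 * q).im = 2 * (q.re + q.im) := by
    simp only [pow_succ, pow_zero, one_mul, mul_assoc, re_gβ_mul, im_gβ_mul]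
    ring
  constructor
  · rintro ⟨q, rfl⟩
    rw [mul_re, mul_im]
    omega
  · rintro ⟨hadd, hsub⟩
    refine ⟨⟨(z.re + z.im) / 4, (z.im - z.re) / 4⟩, ?_⟩
    rw [Zsqrtd.ext_iff, mul_re, mul_im]
    dsimp only
    omega

theorem mem_octagon_sub_one_of_not_gβ_dvd (hz : z ∈ octagon m (2 * k)) (hβ : ¬ gβ ∣ z) :
    z ∈ octagon m (2 * k - 1) := by
  rw [gβ_dvd_iff] at hβ
  simp only [mem_octagon, abs_le] at *
  omega

theorem mem_octagon_of_gβ_sq_dvd (hz : z ∈ octagon (2 * k + 1) n) (hβ : gβ ^ 2 ∣ z) :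
    z ∈ octagon (2 * k) n := by
  obtain ⟨q, rfl⟩ := hβ
  simp only [mem_octagon, abs_le, sq, mul_assoc, re_gβ_mul, im_gβ_mul] at *
  omega

theorem eq_zero_of_gβ_pow_three_dvd (hz : z ∈ octagon m n) (hn : n < 4) (hβ : gβ ^ 3 ∣ z) :
    z = 0 := by
  rw [gβ_pow_three_dvd_iff] at hβ
  simp only [mem_octagon, abs_le] at hz
  rw [Zsqrtd.ext_iff, Zsqrtd.re_zero, Zsqrtd.im_zero]
  omega

theorem eq_of_gβ_pow_three_dvd_sub (hd : d ∈ gD) (hd' : d' ∈ gD) (hβ : gβ ^ 3 ∣ d - d') :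
    d = d' := by
  rw [gD_eq_octagon] at hd hd'
  exact sub_eq_zero.mp (eq_zero_of_gβ_pow_three_dvd (sub_mem_octagon hd hd') (by norm_num) hβ)

theorem exists_mem_gD_gβ_pow_three_dvd_sub (hx : ¬ gβ ∣ x) :
    ∃ d ∈ gD, gβ ^ 3 ∣ x - d := by
  simp only [gβ_dvd_iff] at hx
  simp only [gD, gI, Set.mem_insert_iff, Set.mem_singleton_iff, exists_eq_or_imp, exists_eq_left,
    gβ_pow_three_dvd_iff, Zsqrtd.re_sub, Zsqrtd.im_sub, Zsqrtd.re_neg, Zsqrtd.im_neg,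
    Zsqrtd.re_zero, Zsqrtd.im_zero, Zsqrtd.re_one, Zsqrtd.im_one]
  omega

theorem mem_Qset_of_gβ_mul_mem_octagon (hq : gβ * q ∈ octagon 3 4) : q ∈ Qset := by
  rw [Qset_eq_octagon]
  exact gβ_mul_mem_octagon_iff.mp hq

theorem mem_Qset_of_sub_eq_gβ_pow_three_mul (hx : x ∈ octagon 6 7) (hd : d ∈ gD)
    (hq : x - d = gβ ^ 3 * q) : q ∈ Qset := by
  rw [gD_eq_octagon] at hd
  have hxd : x - d ∈ octagon (2 * 3) (2 * 4) :=
    mem_octagon_of_gβ_sq_dvd (sub_mem_octagon hx hd) ⟨gβ * q, by rw [hq]; ring⟩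
  rw [hq, pow_succ, mul_assoc, gβ_sq_mul_mem_octagon_iff] at hxd
  exact mem_Qset_of_gβ_mul_mem_octagon hxd

theorem add_mem_octagon_of_mem_Qset_of_mem_gD (hq : q ∈ Qset) (hd : d ∈ gD) :
    q + d ∈ octagon 3 4 := by
  rw [Qset_eq_octagon] at hq
  rw [gD_eq_octagon] at hd
  exact add_mem_octagon hq hd

theorem add_digits_mem_octagon (hw : w ∈ octagon 3 3) (hb : b ∈ gD) (hc : c ∈ gD) :
    w + b * gβ + c * gβ ^ 2 ∈ octagon 6 7 := by
  rw [gD_eq_octagon] at hb hc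
  rw [mul_comm b, mul_comm c]
  exact add_mem_octagon (add_mem_octagon hw (gβ_mul_mem_octagon_iff.mpr hb))
    (gβ_sq_mul_mem_octagon_iff.mpr hc)

theorem gβ_dvd_add_digits_iff (w b c : GaussianInt) :
    gβ ∣ w + b * gβ + c * gβ ^ 2 ↔ gβ ∣ w := by
  rw [dvd_add_left ((dvd_pow_self gβ two_ne_zero).mul_left c), dvd_add_left (dvd_mul_left gβ b)]

theorem eq_and_eq_of_add_gβ_pow_three_mul_eq (hd : d ∈ gD) (hd' : d' ∈ gD)
    (h : d + gβ ^ 3 * q = d' + gβ ^ 3 * q') : d = d' ∧ q = q' := by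
  have hdd' : d = d' :=
    eq_of_gβ_pow_three_dvd_sub hd hd' ⟨q' - q, by linear_combination h⟩
  rw [hdd', add_right_inj] at h
  exact ⟨hdd', mul_left_cancel₀ (pow_ne_zero 3 gβ_ne_zero) h⟩

end

/-- If `w ∈ Q + D` and `w ∉ βQ`, then for every pair `b, c ∈ D` there is a
unique pair `(d, q')` with `d ∈ D \ {0}` and `q' ∈ Q` such that
`w + bβ + cβ² = d + β³ q'`. -/
theorem stmt0 (w : GaussianInt)
    (hw : ∃ q ∈ Qset, ∃ a ∈ gD, w = q + a)
    (hw' : ¬ ∃ q ∈ Qset, w = gβ * q)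
    (b c : GaussianInt) (hb : b ∈ gD) (hc : c ∈ gD) :
    ∃! p : GaussianInt × GaussianInt,
      (p.1 ∈ gD ∧ p.1 ≠ 0 ∧ p.2 ∈ Qset) ∧
        w + b * gβ + c * gβ ^ 2 = p.1 + gβ ^ 3 * p.2 := by
  obtain ⟨q, hq, a, ha, rfl⟩ := hw
  have hqa : q + a ∈ octagon 3 4 := add_mem_octagon_of_mem_Qset_of_mem_gD hq ha
  have hβ : ¬ gβ ∣ q + a := fun ⟨r, hr⟩ ↦
    hw' ⟨r, mem_Qset_of_gβ_mul_mem_octagon (hr ▸ hqa), hr⟩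
  have hx : q + a + b * gβ + c * gβ ^ 2 ∈ octagon 6 7 :=
    add_digits_mem_octagon (mem_octagon_sub_one_of_not_gβ_dvd (k := 2) hqa hβ) hb hc
  rw [← gβ_dvd_add_digits_iff _ b c] at hβ
  obtain ⟨d, hd, q', hq'⟩ := exists_mem_gD_gβ_pow_three_dvd_sub hβ
  have hsum : q + a + b * gβ + c * gβ ^ 2 = d + gβ ^ 3 * q' := sub_eq_iff_eq_add'.mp hq'
  have hd0 : d ≠ 0 := by
    rintro rfl
    exact hβ ⟨gβ ^ 2 * q', by linear_combination hsum⟩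
  have hq'Q : q' ∈ Qset := mem_Qset_of_sub_eq_gβ_pow_three_mul hx hd hq'
  refine ⟨(d, q'), ⟨⟨hd, hd0, hq'Q⟩, hsum⟩, ?_⟩
  rintro ⟨e, r⟩ ⟨⟨he, -, -⟩, hsum'⟩
  exact Prod.ext_iff.mpr (eq_and_eq_of_add_gβ_pow_three_mul_eq he hd (hsum'.symm.trans hsum))
end
end

section
/- Let β = i − 1 and D = {0, 1, −1, i, −i}, and for x ∈ ℤ[i], k ∈ ℕ let r(x, k) be the number of normalized (β, D)-representations of x with exactly k nonzero digits. Then for every x ∈ ℤ[i] and every k ∈ ℕ: r(x, k) = r(βx, k) = r(ix, k) = r(x̄, k), where x̄ denotes the complex conjugate of x. -/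
/-!
The nonzero digits are exactly the units of `ℤ[i]`, while `β` is not a unit. Hence a string
representing `β x` ends in the digit `0`, and deleting that digit gives a representation of `x`.
If `φ` is additive and `φ (β ^ j * d) = β ^ j * e_j d` for permutations `e_j` of the digits fixing
`0`, then replacing each `d_j` by `e_j d_j` turns representations of `x` into representations of
`φ x` without moving the nonzero digits. For multiplication by `i` take `e_j d = i * d`; for
conjugation `β̄ = i β`, so `e_j d = i ^ j * d̄`.
-/

open Matrix

noncomputable section

/-- `gr x k` : number of normalized representations of `x` with exactly `k`
nonzero digits. -/
def gr (x : GaussianInt) (k : ℕ) : ℕ :=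
  Nat.card {l : List GaussianInt // gIsRep x l ∧ gNormalized l ∧ gweight l = k}

theorem map_mapIdx {α β γ : Type*} (g : β → γ) (f : ℕ → α → β) (l : List α) :
    (l.mapIdx f).map g = l.mapIdx fun j a => g (f j a) :=
  List.ext_getElem (by simp) (by simp)

section Semiring

variable {R : Type*} [Semiring R]

/-- The value `∑ b ^ j * d_j` in base `b` of the digit string `[d_0, d_1, …]`, least significant
digit first. -/
def evalDigits (b : R) (l : List R) : R := (l.mapIdx fun j d => b ^ j * d).sum

@[simp] theorem evalDigits_nil (b : R) : evalDigits b [] = 0 := rfl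

@[simp] theorem evalDigits_cons (b d : R) (l : List R) :
    evalDigits b (d :: l) = d + b * evalDigits b l := by
  have hshift : (l.mapIdx fun j c => b ^ (j + 1) * c).sum = b * evalDigits b l := by
    simpa only [evalDigits, map_mapIdx, id, List.map_id, pow_succ', mul_assoc] using
      List.sum_map_mul_left (l.mapIdx fun j c => b ^ j * c) id b
  rw [← hshift, evalDigits, List.mapIdx_cons, List.sum_cons, pow_zero, one_mul]

theorem evalDigits_mapIdx {b : R} {φ : R →+ R} {e : ℕ → R → R}
    (he : ∀ j d, φ (b ^ j * d) = b ^ j * e j d) (l : List R) :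
    evalDigits b (l.mapIdx e) = φ (evalDigits b l) := by
  simp only [evalDigits, List.mapIdx_mapIdx, map_list_sum, map_mapIdx, Function.comp_def, he]

variable [DecidableEq R]

/-- The normalized representations of `x` in base `b` with digits in `D` and exactly `k` nonzero
digits, as lists with the least significant digit first. -/
def normalizedReps (b : R) (D : Set R) (x : R) (k : ℕ) : Set (List R) :=
  {l | (∀ d ∈ l, d ∈ D) ∧ evalDigits b l = x ∧ l.getLast? ≠ some 0 ∧ l.countP (· ≠ 0) = k}

theorem zero_cons_mem_normalizedReps_iff {b : R} {D : Set R} (hb : IsLeftRegular b) (h0 : 0 ∈ D)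
    {x : R} (hx : x ≠ 0) {k : ℕ} {l : List R} :
    0 :: l ∈ normalizedReps b D (b * x) k ↔ l ∈ normalizedReps b D x k := by
  cases l with
  | nil => simp [normalizedReps, hx.symm]
  | cons d l => simp [normalizedReps, h0, hb.eq_iff]

end Semiring

section Digitwise

/-- The permutation of digit strings applying `e j` to the digit of index `j`; it transports
representations of `x` to representations of its image under a symmetry of the ring. -/
def permDigits {α : Type*} (e : ℕ → Equiv.Perm α) : Equiv.Perm (List α) where
  toFun l := l.mapIdx fun j => e j
  invFun l := l.mapIdx fun j => (e j).symm
  left_inv l := by simp [List.mapIdx_mapIdx, Function.comp_def, List.mapIdx_eq_iff]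
  right_inv l := by simp [List.mapIdx_mapIdx, Function.comp_def, List.mapIdx_eq_iff]

theorem forall_mem_mapIdx_iff {α β : Type*} {f : ℕ → α → β} {p : β → Prop} {q : α → Prop}
    (h : ∀ j a, p (f j a) ↔ q a) (l : List α) :
    (∀ b ∈ l.mapIdx f, p b) ↔ ∀ a ∈ l, q a := by
  simp only [List.forall_mem_iff_forall_getElem, List.length_mapIdx, List.getElem_mapIdx, h]

theorem countP_mapIdx {α β : Type*} {f : ℕ → α → β} {p : β → Bool} {q : α → Bool}
    (h : ∀ j a, p (f j a) = q a) (l : List α) : (l.mapIdx f).countP p = l.countP q := by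
  induction l generalizing f with
  | nil => rfl
  | cons a l ih => simp only [List.mapIdx_cons, List.countP_cons, h, ih fun j => h (j + 1)]

variable {R : Type*} [Semiring R] [DecidableEq R] {b : R} {D : Set R} {φ : R ≃+ R}
  {e : ℕ → Equiv.Perm R}

theorem permDigits_mem_normalizedReps_iff (he₀ : ∀ j, e j 0 = 0)
    (heD : ∀ j d, e j d ∈ D ↔ d ∈ D) (he : ∀ j d, φ (b ^ j * d) = b ^ j * e j d)
    {x : R} {k : ℕ} {l : List R} :
    permDigits e l ∈ normalizedReps b D (φ x) k ↔ l ∈ normalizedReps b D x k := by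
  have he_zero (j : ℕ) (d : R) : e j d = 0 ↔ d = 0 := by
    rw [← (e j).apply_eq_iff_eq (x := d), he₀]
  have hmem : (∀ d ∈ permDigits e l, d ∈ D) ↔ ∀ d ∈ l, d ∈ D := forall_mem_mapIdx_iff heD l
  have hval : evalDigits b (permDigits e l) = φ (evalDigits b l) :=
    evalDigits_mapIdx (φ := φ.toAddMonoidHom) he l
  have hlast : (permDigits e l).getLast? = some 0 ↔ l.getLast? = some 0 := by
    simp [permDigits, List.getLast?_mapIdx, he_zero]
  have hweight : (permDigits e l).countP (· ≠ 0) = l.countP (· ≠ 0) :=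
    countP_mapIdx (fun j d => by simp only [ne_eq, he_zero]) l
  simp only [normalizedReps, Set.mem_ofPred_eq, hmem, hval, φ.apply_eq_iff_eq, Ne, hlast, ← hweight]

theorem ncard_normalizedReps_of_permDigits (he₀ : ∀ j, e j 0 = 0)
    (heD : ∀ j d, e j d ∈ D ↔ d ∈ D) (he : ∀ j d, φ (b ^ j * d) = b ^ j * e j d)
    (x : R) (k : ℕ) :
    (normalizedReps b D (φ x) k).ncard = (normalizedReps b D x k).ncard :=
  Eq.symm <| Nat.card_congr <| (permDigits e).subtypeEquiv fun _ =>
    (permDigits_mem_normalizedReps_iff he₀ heD he).symm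

end Digitwise

section CommSemiring

variable {R : Type*} [CommSemiring R] [DecidableEq R] {b u : R} {D : Set R}

theorem ncard_normalizedReps_unit_mul (hu : IsUnit u) (huD : ∀ d, u * d ∈ D ↔ d ∈ D)
    (x : R) (k : ℕ) :
    (normalizedReps b D (u * x) k).ncard = (normalizedReps b D x k).ncard := by
  obtain ⟨u, rfl⟩ := hu
  exact ncard_normalizedReps_of_permDigits (φ := AddAut.mulLeft u) (e := fun _ => u.mulLeft)
    (fun _ => mul_zero _) (fun _ => huD) (fun _ _ => mul_left_comm _ _ _) x k

theorem ncard_normalizedReps_ringEquiv {σ : R ≃+* R} (hu : IsUnit u) (hσ : σ b = u * b)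
    (huD : ∀ d, u * d ∈ D ↔ d ∈ D) (hσD : ∀ d, σ d ∈ D ↔ d ∈ D) (x : R) (k : ℕ) :
    (normalizedReps b D (σ x) k).ncard = (normalizedReps b D x k).ncard := by
  obtain ⟨u, rfl⟩ := hu
  have hpowD (j : ℕ) (d : R) : (u : R) ^ j * d ∈ D ↔ d ∈ D := by
    induction j with
    | zero => rw [pow_zero, one_mul]
    | succ j ih => rw [pow_succ', mul_assoc, huD, ih]
  refine ncard_normalizedReps_of_permDigits (φ := σ.toAddEquiv)
    (e := fun j => σ.toEquiv.trans (u ^ j).mulLeft) (fun j => ?_) (fun j d => ?_)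
    (fun j d => ?_) x k
  · simp
  · simpa using (hpowD j (σ d)).trans (hσD d)
  · simp [hσ, mul_pow, mul_assoc, mul_left_comm]

end CommSemiring

section Shift

variable {R : Type*} [Ring R] [DecidableEq R] {b : R} {D : Set R}

theorem normalizedReps_base_mul (hb : IsLeftRegular b) (h0 : 0 ∈ D)
    (hD : ∀ d ∈ D, b ∣ d → d = 0) {x : R} (hx : x ≠ 0) (k : ℕ) :
    normalizedReps b D (b * x) k = List.cons 0 '' normalizedReps b D x k := by
  refine Set.Subset.antisymm (fun l hl => ?_) ?_
  · cases l with
    | nil => exact absurd (hb.mul_left_eq_zero_iff.1 hl.2.1.symm) hx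
    | cons d l =>
      have hval : d + b * evalDigits b l = b * x := by
        rw [← evalDigits_cons, hl.2.1]
      have hdvd : b ∣ d := (dvd_add_left (dvd_mul_right b _)).1 (hval ▸ dvd_mul_right b x)
      obtain rfl := hD d (hl.1 d List.mem_cons_self) hdvd
      exact Set.mem_image_of_mem _ ((zero_cons_mem_normalizedReps_iff hb h0 hx).1 hl)
  · rintro _ ⟨l, hl, rfl⟩
    exact (zero_cons_mem_normalizedReps_iff hb h0 hx).2 hl

theorem ncard_normalizedReps_base_mul (hb : IsLeftRegular b) (h0 : 0 ∈ D)
    (hD : ∀ d ∈ D, b ∣ d → d = 0) (x : R) (k : ℕ) :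
    (normalizedReps b D (b * x) k).ncard = (normalizedReps b D x k).ncard := by
  -- For `x = 0` the empty string must stay empty, so prepending `0` is no bijection there.
  obtain rfl | hx := eq_or_ne x 0
  · rw [mul_zero]
  · rw [normalizedReps_base_mul hb h0 hD hx, Set.ncard_image_of_injective _ List.cons_injective]

end Shift

section UnitDigits

/-- The digit set consisting of `0` and the units of `R`; for `R = ℤ[i]` it is
`{0, 1, -1, i, -i}`. -/
def unitDigits (R : Type*) [MonoidWithZero R] : Set R := {d | d = 0 ∨ IsUnit d}

theorem unit_mul_mem_unitDigits_iff {R : Type*} [MonoidWithZero R] {u : R} (hu : IsUnit u)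
    (d : R) : u * d ∈ unitDigits R ↔ d ∈ unitDigits R := by
  obtain ⟨u, rfl⟩ := hu
  simp [unitDigits]

theorem map_mem_unitDigits_iff {R S : Type*} [MonoidWithZero R] [MonoidWithZero S] (σ : R ≃* S)
    (d : R) : σ d ∈ unitDigits S ↔ d ∈ unitDigits R := by
  simp [unitDigits]

theorem eq_zero_of_mem_unitDigits_of_dvd {R : Type*} [CommMonoidWithZero R] {b d : R}
    (hb : ¬IsUnit b) (hd : d ∈ unitDigits R) (hbd : b ∣ d) : d = 0 :=
  hd.resolve_right fun hunit => hb (isUnit_of_dvd_unit hbd hunit)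

theorem stmt3_general {R : Type*} [CommRing R] [DecidableEq R] {b u v : R} {σ : R ≃+* R}
    (hb : IsLeftRegular b) (hb_unit : ¬IsUnit b) (hu : IsUnit u) (hv : IsUnit v) (hσ : σ b = v * b)
    (x : R) (k : ℕ) :
    (normalizedReps b (unitDigits R) x k).ncard =
        (normalizedReps b (unitDigits R) (b * x) k).ncard ∧
      (normalizedReps b (unitDigits R) x k).ncard =
        (normalizedReps b (unitDigits R) (u * x) k).ncard ∧
      (normalizedReps b (unitDigits R) x k).ncard =
        (normalizedReps b (unitDigits R) (σ x) k).ncard :=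
  ⟨(ncard_normalizedReps_base_mul hb (Or.inl rfl)
      (fun _ => eq_zero_of_mem_unitDigits_of_dvd hb_unit) x k).symm,
    (ncard_normalizedReps_unit_mul hu (unit_mul_mem_unitDigits_iff hu) x k).symm,
    (ncard_normalizedReps_ringEquiv hv hσ (unit_mul_mem_unitDigits_iff hv)
      (map_mem_unitDigits_iff σ.toMulEquiv) x k).symm⟩

end UnitDigits

section Gaussian

theorem gval_eq_evalDigits (l : List GaussianInt) : gval l = evalDigits gβ l := by
  induction l with
  | nil => rfl
  | cons d l ih => rw [evalDigits_cons, ← ih]; rfl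

theorem isUnit_gI : IsUnit gI := Zsqrtd.norm_eq_one_iff.1 rfl

theorem not_isUnit_gβ : ¬IsUnit gβ := by
  rw [← Zsqrtd.norm_eq_one_iff]
  decide

theorem isLeftRegular_gβ : IsLeftRegular gβ :=
  (IsRegular.of_ne_zero (by decide)).left

theorem star_gβ : star gβ = gI * gβ := by decide

theorem gD_eq_unitDigits : gD = unitDigits GaussianInt := by
  ext ⟨a, b⟩
  simp only [unitDigits, Set.mem_ofPred_eq, ← Zsqrtd.norm_eq_one_iff' (by decide : (-1 : ℤ) ≤ 0),
    Zsqrtd.norm_def, gD, gI, Set.mem_insert_iff, Set.mem_singleton_iff, Zsqrtd.ext_iff]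
  constructor
  · rintro (⟨ha, hb⟩ | ⟨ha, hb⟩ | ⟨ha, hb⟩ | ⟨ha, hb⟩ | ⟨ha, hb⟩) <;> simp_all
  · rintro (h | h)
    · exact Or.inl h
    · obtain ⟨ha₁, ha₂⟩ : -1 ≤ a ∧ a ≤ 1 := by constructor <;> nlinarith [mul_self_nonneg b]
      obtain ⟨hb₁, hb₂⟩ : -1 ≤ b ∧ b ≤ 1 := by constructor <;> nlinarith [mul_self_nonneg a]
      interval_cases a <;> interval_cases b <;> simp_all

theorem gr_eq_ncard_normalizedReps (x : GaussianInt) (k : ℕ) :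
    gr x k = (normalizedReps gβ (unitDigits GaussianInt) x k).ncard := by
  refine Nat.card_congr <| Equiv.subtypeEquivRight fun l => ?_
  simp only [gIsRep, gNormalized, gweight, gval_eq_evalDigits, gD_eq_unitDigits, normalizedReps,
    List.countP_eq_length_filter, Set.mem_ofPred_eq, and_assoc]

end Gaussian

/-- Symmetries of the counting function `r(x, k)`. -/
theorem stmt3 (x : GaussianInt) (k : ℕ) :
    gr x k = gr (gβ * x) k ∧ gr x k = gr (gI * x) k ∧ gr x k = gr (star x) k := by
  simp only [gr_eq_ncard_normalizedReps]
  exact stmt3_general (σ := starRingAut) isLeftRegular_gβ not_isUnit_gβ isUnit_gI isUnit_gI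
    star_gβ x k
end
end

section
/- For every N ∈ ℕ and every finite sequence d_1, …, d_n of digits from D = {0, 1, −1, i, −i} with exactly N nonzero terms, the product e A_{d_1} A_{d_2} ⋯ A_{d_n} eᵀ is at most r_N; moreover for every N there exists such a sequence with e A_{d_1} ⋯ A_{d_n} eᵀ = r_N. (In other words, Max(N) = r_N, where Max(N) is the maximum of e A_{d_1} ⋯ A_{d_n} eᵀ over all digit sequences with exactly N nonzero terms.) -/
/-!
Up to a power of `R`, every column `A_{d_1} ⋯ A_{d_n} eᵀ` has at most four nonzero entries
`(x, p, q, s)`, where `x` is the quantity to be maximized. Prepending a nonzero digit acts on them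
by one of four linear maps `T_0, …, T_3`, chosen by the quotient of the new digit by the previous
one; `T_2` and `T_3` are the mirror images of `T_1` and `T_0` under `p ↔ q`. A zero digit acts by
`(x, p, q, s) ↦ (x, s, 0, 0)`, which never helps, as `s ≤ p` throughout.

The bound is a dynamic programming argument: the potential `Φ_m (x, p, q, s)` majorizes the largest
`x` that `m` further nonzero digits can produce. Pulling `x` back along `T_1, T_3, T_0, T_1` gives
`17 x + 8 p + 3 q`, and pulling this back along powers of `T_1` gives the forms
`f_m = r_m x + r_{m-1} p + r_{m-2} q`. For `m ≥ 4` the potential is the maximum of `f_m`,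
`f_{m-1} ∘ T_0` and their mirror images: by `s ≤ q` and `2 r_m ≤ r_{m+1}`, every pullback of a form
of the second kind is dominated by a form of the first kind. So `x ≤ Φ_N (1, 0, 0, 0) = r_N` for `N`
nonzero digits, and for `N ≥ 4` the word that produces `f_N` attains this.
-/

open Matrix

noncomputable section

/-- The row vector `e = (1,0,0,0,0,0,0,0,0)`. -/
def e9 : Matrix (Fin 1) (Fin 9) ℤ := !![1,0,0,0,0,0,0,0,0]

/-- The permutation matrix `R = diag(1, P1, P1)`. -/
def R9 : Matrix (Fin 9) (Fin 9) ℤ :=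
  !![1,0,0,0,0,0,0,0,0;
     0,0,1,0,0,0,0,0,0;
     0,0,0,1,0,0,0,0,0;
     0,0,0,0,1,0,0,0,0;
     0,1,0,0,0,0,0,0,0;
     0,0,0,0,0,0,1,0,0;
     0,0,0,0,0,0,0,1,0;
     0,0,0,0,0,0,0,0,1;
     0,0,0,0,0,1,0,0,0]

/-- The matrix `A_1`. -/
def A1 : Matrix (Fin 9) (Fin 9) ℤ :=
  !![1,1,0,0,0,0,0,0,0;
     0,0,0,0,0,0,0,0,0;
     2,0,1,1,0,0,1,0,0;
     2,0,0,1,1,0,0,1,0;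
     0,0,0,0,0,0,0,0,0;
     0,0,0,0,0,0,0,0,0;
     1,0,0,1,0,0,0,0,0;
     0,0,0,0,0,0,0,0,0;
     0,0,0,0,0,0,0,0,0]

/-- The matrix `A_0`. -/
def A0 : Matrix (Fin 9) (Fin 9) ℤ :=
  !![1,0,0,0,0,0,0,0,0;
     0,0,0,0,0,0,1,0,0;
     0,0,0,0,0,0,0,1,0;
     0,0,0,0,0,0,0,0,1;
     0,0,0,0,0,1,0,0,0;
     0,0,0,0,0,0,0,0,0;
     0,0,0,0,0,0,0,0,0;
     0,0,0,0,0,0,0,0,0;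
     0,0,0,0,0,0,0,0,0]

/-- The matrix `A_i = Rᵀ A_1 R`. -/
def Ai : Matrix (Fin 9) (Fin 9) ℤ := R9ᵀ * A1 * R9

/-- The matrix `A_{-1} = Rᵀ A_i R`. -/
def Am1 : Matrix (Fin 9) (Fin 9) ℤ := R9ᵀ * Ai * R9

/-- The matrix `A_{-i} = Rᵀ A_{-1} R`. -/
def Ami : Matrix (Fin 9) (Fin 9) ℤ := R9ᵀ * Am1 * R9

/-- The matrix `A_d` associated with a digit `d ∈ D`. -/
def Amat (d : GaussianInt) : Matrix (Fin 9) (Fin 9) ℤ :=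
  if d = 0 then A0
  else if d = 1 then A1
  else if d = gI then Ai
  else if d = -1 then Am1
  else Ami

/-- The sequence `r_N`: `r_0 = r_1 = 1`, `r_2 = 3`, `r_3 = 8`, `r_4 = 17`,
and `r_{N+3} = r_{N+2} + 2 r_{N+1} + 2 r_N` for `N ≥ 2`. -/
def rseq : ℕ → ℕ
  | 0 => 1
  | 1 => 1
  | 2 => 3
  | 3 => 8
  | 4 => 17
  | (n + 5) => rseq (n + 4) + 2 * rseq (n + 3) + 2 * rseq (n + 2)

/-! ### The sequence `r_N` -/

lemma rseq_add_five (n : ℕ) :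
    rseq (n + 5) = rseq (n + 4) + 2 * rseq (n + 3) + 2 * rseq (n + 2) := rfl

lemma two_mul_rseq_le (n : ℕ) : 2 * rseq (n + 1) ≤ rseq (n + 2) := by
  induction n using Nat.strong_induction_on with
  | _ n ih =>
    match n with
    | 0 | 1 | 2 | 3 => decide
    | n + 4 =>
      have h₂ : 2 * rseq (n + 2) ≤ rseq (n + 3) := ih (n + 1) (by lia)
      have h₃ : 2 * rseq (n + 3) ≤ rseq (n + 4) := ih (n + 2) (by lia)
      have h₅ := rseq_add_five n
      have h₆ : rseq (n + 6) = rseq (n + 5) + 2 * rseq (n + 4) + 2 * rseq (n + 3) :=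
        rseq_add_five (n + 1)
      change 2 * rseq (n + 5) ≤ rseq (n + 6)
      lia

/-- Unlike the recurrence of `rseq`, this holds from `n = 0` on. -/
lemma rseq_rec_le (n : ℕ) : rseq (n + 2) + 2 * rseq (n + 1) + 2 * rseq n ≤ rseq (n + 3) := by
  match n with
  | 0 | 1 => decide
  | n + 2 => exact (rseq_add_five n).ge

/-! ### Profiles of columns -/

/-- The entries of a column `A_{d_1} ⋯ A_{d_n} eᵀ` that can be nonzero. `Profile.toVec` says which
entries these are, and the digits act on them in the order `d_n, …, d_1`. -/
structure Profile where
  x : ℕ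
  p : ℕ
  q : ℕ
  s : ℕ

namespace Profile

/-- The entrywise order. -/
instance : LE Profile := ⟨fun S S' => S.x ≤ S'.x ∧ S.p ≤ S'.p ∧ S.q ≤ S'.q ∧ S.s ≤ S'.s⟩

lemma le_iff {S S' : Profile} :
    S ≤ S' ↔ S.x ≤ S'.x ∧ S.p ≤ S'.p ∧ S.q ≤ S'.q ∧ S.s ≤ S'.s := Iff.rfl

/-- The profile of the column `eᵀ`. -/
def init : Profile := ⟨1, 0, 0, 0⟩

/-- The mirror image `p ↔ q` of a profile; it exchanges `T_0` with `T_3` and `T_1` with `T_2`. -/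
def swap (S : Profile) : Profile := ⟨S.x, S.q, S.p, S.s⟩

/-- The map `T_0`: the effect of a nonzero digit equal to the previous one. -/
def same (S : Profile) : Profile :=
  ⟨S.x, 2 * S.x + S.p + S.q + S.s, 2 * S.x + S.q, S.x + S.q⟩

/-- The map `T_1`: the effect of a nonzero digit equal to `i` times the previous one. -/
def turn (S : Profile) : Profile :=
  ⟨S.x + S.p, 2 * S.x + S.q, 2 * S.x, S.x⟩

/-- The map `T_t`: the effect of a nonzero digit equal to `i ^ t` times the previous one. If zeros
intervene, `i ^ k` with the orientation `k` of the column, see `Profile.toVec`, takes the place of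
the previous digit. -/
def step (S : Profile) : Fin 4 → Profile :=
  ![S.same, S.turn, S.swap.turn.swap, S.swap.same.swap]

/-- The effect of the digit `0`, which also changes the orientation, see `A0_mulVec_toVec`. -/
def skip (S : Profile) : Profile := ⟨S.x, S.s, 0, 0⟩

/-- The cone that contains the profiles of all columns `A_{d_1} ⋯ A_{d_n} eᵀ`. -/
structure InCone (S : Profile) : Prop where
  s_le_p : S.s ≤ S.p
  s_le_q : S.s ≤ S.q

lemma inCone_init : init.InCone := ⟨le_rfl, le_rfl⟩

lemma InCone.swap {S : Profile} (hS : S.InCone) : S.swap.InCone := ⟨hS.s_le_q, hS.s_le_p⟩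

lemma inCone_same (S : Profile) : S.same.InCone := by
  constructor <;> simp only [same] <;> lia

lemma inCone_turn (S : Profile) : S.turn.InCone := by
  constructor <;> simp only [turn] <;> lia

lemma inCone_step (S : Profile) (t : Fin 4) : (S.step t).InCone := by
  fin_cases t
  exacts [S.inCone_same, S.inCone_turn, S.swap.inCone_turn.swap, S.swap.inCone_same.swap]

lemma inCone_skip (S : Profile) : S.skip.InCone := ⟨Nat.zero_le _, le_rfl⟩

lemma InCone.skip_le {S : Profile} (hS : S.InCone) : S.skip ≤ S :=
  ⟨le_rfl, hS.s_le_p, Nat.zero_le _, Nat.zero_le _⟩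

lemma swap_mono {S S' : Profile} (h : S ≤ S') : S.swap ≤ S'.swap := ⟨h.1, h.2.2.1, h.2.1, h.2.2.2⟩

lemma same_mono {S S' : Profile} (h : S ≤ S') : S.same ≤ S'.same := by
  simp only [le_iff, same] at h ⊢
  lia

/-! ### The potential -/

/-- The linear form `f_{m+2} = r_{m+2} x + r_{m+1} p + r_m q`. For `m ≥ 2` it is the pullback of `x`
along `T_1 ^ (m - 1), T_3, T_0, T_1`. -/
def form (m : ℕ) (S : Profile) : ℕ :=
  rseq (m + 2) * S.x + rseq (m + 1) * S.p + rseq m * S.q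

lemma form_mono (m : ℕ) {S S' : Profile} (h : S ≤ S') : form m S ≤ form m S' := by
  obtain ⟨hx, hp, hq, -⟩ := h
  unfold form
  gcongr

lemma form_swap_le (m : ℕ) {S : Profile} (h : S.q ≤ S.p) :
    form (m + 1) S.swap ≤ form (m + 1) S := by
  have hr : rseq (m + 1) ≤ rseq (m + 2) := by linarith [two_mul_rseq_le m]
  have := mul_add_mul_le_mul_add_mul hr h
  simp only [form, swap]
  linarith

lemma form_turn (m : ℕ) (S : Profile) : form (m + 2) S.turn = form (m + 3) S := by
  simp only [form, turn, rseq_add_five]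
  ring

lemma form_init (m : ℕ) : form m init = rseq (m + 2) := by
  simp [form, init]

lemma form_same_init_le (m : ℕ) : form m init.same ≤ rseq (m + 3) := by
  have := rseq_rec_le m
  simp only [form, same, init]
  lia

lemma form_same_swap_turn_le (m : ℕ) (S : Profile) :
    form (m + 1) S.turn.swap.same ≤ form (m + 3) S := by
  have h₁ := two_mul_rseq_le m
  have h₂ : 2 * rseq (m + 2) ≤ rseq (m + 3) := two_mul_rseq_le (m + 1)
  have h₄ : rseq (m + 3) + 2 * rseq (m + 2) + 2 * rseq (m + 1) ≤ rseq (m + 4) := rseq_rec_le (m + 1)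
  calc form (m + 1) S.turn.swap.same
      = (rseq (m + 3) + 7 * rseq (m + 2) + 4 * rseq (m + 1)) * S.x
        + (rseq (m + 3) + 2 * rseq (m + 2) + 2 * rseq (m + 1)) * S.p
        + (rseq (m + 2) + rseq (m + 1)) * S.q := by
        simp only [form, turn, swap, same]
        ring
    _ ≤ rseq (m + 5) * S.x + rseq (m + 4) * S.p + rseq (m + 3) * S.q := by
      have h₅ := rseq_add_five m
      gcongr <;> lia

lemma form_same_swap_same_le (m : ℕ) {S : Profile} (h : S.s ≤ S.q) :
    form (m + 1) S.same.swap.same ≤ form (m + 3) S.swap := by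
  have h₁ := two_mul_rseq_le m
  have h₂ : 2 * rseq (m + 2) ≤ rseq (m + 3) := two_mul_rseq_le (m + 1)
  have h₄ : rseq (m + 3) + 2 * rseq (m + 2) + 2 * rseq (m + 1) ≤ rseq (m + 4) := rseq_rec_le (m + 1)
  calc form (m + 1) S.same.swap.same
      = (rseq (m + 3) + 7 * rseq (m + 2) + 4 * rseq (m + 1)) * S.x
        + (3 * rseq (m + 2) + rseq (m + 1)) * S.q + (rseq (m + 2) + rseq (m + 1)) * S.s
        + (rseq (m + 2) + rseq (m + 1)) * S.p := by
        simp only [form, swap, same]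
        ring
    _ ≤ (rseq (m + 3) + 7 * rseq (m + 2) + 4 * rseq (m + 1)) * S.x
        + (3 * rseq (m + 2) + rseq (m + 1)) * S.q + (rseq (m + 2) + rseq (m + 1)) * S.q
        + (rseq (m + 2) + rseq (m + 1)) * S.p := by
      gcongr
    _ = (rseq (m + 3) + 7 * rseq (m + 2) + 4 * rseq (m + 1)) * S.x
        + (4 * rseq (m + 2) + 2 * rseq (m + 1)) * S.q
        + (rseq (m + 2) + rseq (m + 1)) * S.p := by
      ring
    _ ≤ rseq (m + 5) * S.x + rseq (m + 4) * S.q + rseq (m + 3) * S.p := by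
      have h₅ := rseq_add_five m
      gcongr <;> lia

/-- The half of the potential `Φ_m` that is decisive for `q ≤ p`. Up to `m = 3` it is the pullback
of `x` along `T_1`, `T_0 T_1`, `T_3 T_0 T_1`, where the letter on the left acts first. -/
def halfPotential : ℕ → Profile → ℕ
  | 0, S => S.x
  | 1, S => S.x + S.p
  | 2, S => 3 * S.x + S.p + S.q + S.s
  | 3, S => 8 * S.x + 3 * S.p + S.q + S.s
  | m + 4, S => max (form (m + 2) S) (form (m + 1) S.swap.same)

lemma halfPotential_mono (m : ℕ) {S S' : Profile} (h : S ≤ S') :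
    halfPotential m S ≤ halfPotential m S' := by
  match m with
  | 0 | 1 | 2 | 3 => rw [le_iff] at h; simp only [halfPotential]; lia
  | m + 4 => exact max_le_max (form_mono _ h) (form_mono _ (same_mono (swap_mono h)))

lemma halfPotential_swap_le (m : ℕ) {S : Profile} (h : S.q ≤ S.p) :
    halfPotential m S.swap ≤ halfPotential m S := by
  match m with
  | 0 | 1 | 2 | 3 => simp only [halfPotential, swap]; lia
  | m + 4 =>
    refine max_le_max (form_swap_le _ h) (form_mono _ ?_)
    simp only [le_iff, same, swap]
    lia

lemma halfPotential_init (m : ℕ) : halfPotential m init = rseq m := by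
  match m with
  | 0 | 1 | 2 | 3 => rfl
  | m + 4 =>
    rw [halfPotential, form_init]
    exact max_eq_left (form_same_init_le (m + 1))

lemma halfPotential_turn_le (m : ℕ) (S : Profile) :
    halfPotential m S.turn ≤ halfPotential (m + 1) S := by
  match m with
  | 0 | 1 | 2 => simp only [halfPotential, turn]; lia
  | 3 =>
    refine le_max_of_le_left ?_
    simp only [halfPotential, form, turn, rseq]
    lia
  | m + 4 =>
    exact le_max_of_le_left (max_le (form_turn m S).le (form_same_swap_turn_le m S))

lemma halfPotential_same_le (m : ℕ) {S : Profile} (h : S.s ≤ S.q) :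
    halfPotential m S.same ≤ halfPotential (m + 1) S.swap := by
  match m with
  | 0 | 1 | 2 => simp only [halfPotential, same, swap]; lia
  | 3 =>
    refine le_max_of_le_left ?_
    simp only [halfPotential, form, same, swap, rseq]
    lia
  | m + 4 => exact max_le (le_max_right _ _) (le_max_of_le_left (form_same_swap_same_le m h))

/-- The potential `Φ_m`, an upper bound for the entry `x` after `m` further nonzero digits. -/
def potential (m : ℕ) (S : Profile) : ℕ := max (halfPotential m S) (halfPotential m S.swap)

lemma potential_swap (m : ℕ) (S : Profile) : potential m S.swap = potential m S := max_comm _ _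

lemma potential_mono (m : ℕ) {S S' : Profile} (h : S ≤ S') : potential m S ≤ potential m S' :=
  max_le_max (halfPotential_mono m h) (halfPotential_mono m (swap_mono h))

lemma potential_init (m : ℕ) : potential m init = rseq m :=
  (max_self _).trans (halfPotential_init m)

lemma potential_same_le (m : ℕ) {S : Profile} (hS : S.InCone) :
    potential m S.same ≤ potential (m + 1) S := by
  have hqp : S.same.q ≤ S.same.p := by simp only [same]; lia
  calc potential m S.same = halfPotential m S.same := max_eq_left (halfPotential_swap_le m hqp)
    _ ≤ halfPotential (m + 1) S.swap := halfPotential_same_le m hS.s_le_q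
    _ ≤ potential (m + 1) S := le_max_right _ _

lemma potential_turn_le (m : ℕ) (S : Profile) : potential m S.turn ≤ potential (m + 1) S := by
  have hqp : S.turn.q ≤ S.turn.p := by simp only [turn]; lia
  calc potential m S.turn = halfPotential m S.turn := max_eq_left (halfPotential_swap_le m hqp)
    _ ≤ halfPotential (m + 1) S := halfPotential_turn_le m S
    _ ≤ potential (m + 1) S := le_max_left _ _

lemma potential_step_le (m : ℕ) {S : Profile} (hS : S.InCone) (t : Fin 4) :
    potential m (S.step t) ≤ potential (m + 1) S := by
  fin_cases t
  · exact potential_same_le m hS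
  · exact potential_turn_le m S
  · calc potential m S.swap.turn.swap = potential m S.swap.turn := potential_swap m _
      _ ≤ potential (m + 1) S.swap := potential_turn_le m S.swap
      _ = potential (m + 1) S := potential_swap (m + 1) S
  · calc potential m S.swap.same.swap = potential m S.swap.same := potential_swap m _
      _ ≤ potential (m + 1) S.swap := potential_same_le m hS.swap
      _ = potential (m + 1) S := potential_swap (m + 1) S

/-! ### Optimal words -/

/-- The effect of a word of nonzero digits, each given relative to the preceding one as in
`Profile.step`. -/
def run (S : Profile) (w : List (Fin 4)) : Profile := w.foldl step S

lemma run_append_singleton (S : Profile) (w : List (Fin 4)) (t : Fin 4) :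
    S.run (w ++ [t]) = (S.run w).step t := by
  simp [run]

lemma run_replicate_append_x (m : ℕ) (S : Profile) :
    (S.run (List.replicate m 1 ++ [1, 3, 0, 1])).x = form (m + 2) S := by
  induction m generalizing S with
  | zero =>
    simp only [run, List.replicate_zero, List.nil_append, List.foldl_cons, List.foldl_nil, step,
      cons_val, same, turn, swap, form, rseq]
    lia
  | succ m ih =>
    calc (S.run (List.replicate (m + 1) 1 ++ [1, 3, 0, 1])).x
        = (S.turn.run (List.replicate m 1 ++ [1, 3, 0, 1])).x := rfl
      _ = form (m + 2) S.turn := ih S.turn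
      _ = form (m + 3) S := form_turn m S

lemma exists_run_init_x_eq_rseq (N : ℕ) : ∃ w, w.length = N ∧ (init.run w).x = rseq N := by
  match N with
  | 0 => exact ⟨[], rfl, rfl⟩
  | 1 => exact ⟨[0], rfl, rfl⟩
  | 2 => exact ⟨[0, 1], rfl, rfl⟩
  | 3 => exact ⟨[0, 0, 1], rfl, rfl⟩
  | N + 4 =>
    exact ⟨List.replicate N 1 ++ [1, 3, 0, 1], by simp,
      (run_replicate_append_x N init).trans (form_init _)⟩

/-! ### The matrices acting on profiles -/

/-- The column with profile `S` and orientation `k`: `(Rᵀ) ^ k` applied to the one for `k = 0`. The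
digit `i ^ j` produces the orientation `j`, and the digit `0` lowers the orientation by one. -/
def toVec (S : Profile) : Fin 4 → Fin 9 → ℤ :=
  ![![S.x, 0, S.p, S.q, 0, 0, S.s, 0, 0],
    ![S.x, 0, 0, S.p, S.q, 0, 0, S.s, 0],
    ![S.x, S.q, 0, 0, S.p, 0, 0, 0, S.s],
    ![S.x, S.p, S.q, 0, 0, S.s, 0, 0, 0]]

lemma toVec_apply_zero (S : Profile) (k : Fin 4) : S.toVec k 0 = S.x := by
  fin_cases k <;> rfl

lemma A0_mulVec_toVec (S : Profile) (k : Fin 4) : A0 *ᵥ S.toVec k = S.skip.toVec (k - 1) := by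
  fin_cases k <;> ext j <;> fin_cases j <;>
    simp [A0, toVec, skip, mulVec, dotProduct, Fin.sum_univ_succ]

lemma A1_mulVec_toVec (S : Profile) (k : Fin 4) : A1 *ᵥ S.toVec k = (S.step (-k)).toVec 0 := by
  fin_cases k <;> ext j <;> fin_cases j <;>
    simp [A1, toVec, step, same, turn, swap, mulVec, dotProduct, Fin.sum_univ_succ] <;> lia

lemma R9_mulVec_toVec (S : Profile) (k : Fin 4) : R9 *ᵥ S.toVec k = S.toVec (k - 1) := by
  fin_cases k <;> ext j <;> fin_cases j <;>
    simp [R9, toVec, mulVec, dotProduct, Fin.sum_univ_succ]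

lemma R9_transpose_mulVec_toVec (S : Profile) (k : Fin 4) :
    R9ᵀ *ᵥ S.toVec k = S.toVec (k + 1) := by
  fin_cases k <;> ext j <;> fin_cases j <;>
    simp [R9, toVec, mulVec, dotProduct, Fin.sum_univ_succ]

end Profile

open Profile

/-- The nonzero digits `i ^ j`. -/
def unitDigit : Fin 4 → GaussianInt := ![1, gI, -1, -gI]

lemma unitDigit_ne_zero (j : Fin 4) : unitDigit j ≠ 0 := by
  fin_cases j <;> simp [unitDigit, gI, Zsqrtd.ext_iff]

lemma unitDigit_mem_gD (j : Fin 4) : unitDigit j ∈ gD := by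
  fin_cases j <;> simp [unitDigit, gD]

lemma eq_zero_or_eq_unitDigit_of_mem_gD {d : GaussianInt} (hd : d ∈ gD) :
    d = 0 ∨ ∃ j, d = unitDigit j := by
  rcases hd with h | h | h | h | h
  exacts [.inl h, .inr ⟨0, h⟩, .inr ⟨2, h⟩, .inr ⟨1, h⟩, .inr ⟨3, h⟩]

lemma gweight_zero_cons (l : List GaussianInt) : gweight (0 :: l) = gweight l := by
  simp [gweight]

lemma gweight_unitDigit_cons (j : Fin 4) (l : List GaussianInt) :
    gweight (unitDigit j :: l) = gweight l + 1 := by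
  simp [gweight, unitDigit_ne_zero]

lemma Amat_zero : Amat 0 = A0 := if_pos rfl

lemma Amat_unitDigit (j : Fin 4) : Amat (unitDigit j) = ![A1, Ai, Am1, Ami] j := by
  fin_cases j <;> simp [Amat, unitDigit, gI, Zsqrtd.ext_iff]

lemma Amat_unitDigit_mulVec_toVec (S : Profile) (j k : Fin 4) :
    Amat (unitDigit j) *ᵥ S.toVec k = (S.step (j - k)).toVec j := by
  rw [Amat_unitDigit]
  fin_cases j <;>
    simp only [Fin.reduceFinMk, cons_val, Ai, Am1, Ami, ← mulVec_mulVec, A1_mulVec_toVec,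
      R9_mulVec_toVec, R9_transpose_mulVec_toVec] <;>
    fin_cases k <;> rfl

/-- The column `A_{d_1} ⋯ A_{d_n} eᵀ` of a list of digits. -/
def column (l : List GaussianInt) : Fin 9 → ℤ := (l.map Amat).prod *ᵥ init.toVec 0

lemma e9_mul_prod_mul_transpose (l : List GaussianInt) :
    (e9 * (l.map Amat).prod * e9ᵀ) 0 0 = column l 0 := by
  simp [column, e9, init, toVec, mul_apply, mulVec, vecMul, dotProduct, Fin.sum_univ_succ]

lemma column_nil : column [] = init.toVec 0 := by simp [column]

lemma column_cons (d : GaussianInt) (l : List GaussianInt) :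
    column (d :: l) = Amat d *ᵥ column l := by
  simp [column]

lemma exists_column_eq_toVec {l : List GaussianInt} (hl : ∀ d ∈ l, d ∈ gD) :
    ∃ (S : Profile) (k : Fin 4), column l = S.toVec k ∧ S.InCone ∧
      ∀ m, potential m S ≤ rseq (gweight l + m) := by
  induction l with
  | nil => exact ⟨init, 0, column_nil, inCone_init, fun m => by simp [gweight, potential_init]⟩
  | cons d l ih =>
    rw [List.forall_mem_cons] at hl
    obtain ⟨S, k, hl_col, hS, hpot⟩ := ih hl.2
    rw [column_cons, hl_col]
    rcases eq_zero_or_eq_unitDigit_of_mem_gD hl.1 with rfl | ⟨j, rfl⟩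
    · rw [Amat_zero, gweight_zero_cons]
      exact ⟨S.skip, k - 1, A0_mulVec_toVec S k, S.inCone_skip,
        fun m => (potential_mono m hS.skip_le).trans (hpot m)⟩
    · refine ⟨S.step (j - k), j, Amat_unitDigit_mulVec_toVec S j k, S.inCone_step _, fun m => ?_⟩
      calc potential m (S.step (j - k)) ≤ potential (m + 1) S := potential_step_le m hS _
        _ ≤ rseq (gweight l + (m + 1)) := hpot (m + 1)
        _ = rseq (gweight (unitDigit j :: l) + m) := by
          rw [gweight_unitDigit_cons, add_assoc, add_comm 1]

lemma column_apply_zero_le {l : List GaussianInt} (hl : ∀ d ∈ l, d ∈ gD) :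
    column l 0 ≤ rseq (gweight l) := by
  obtain ⟨S, k, hl_col, -, hpot⟩ := exists_column_eq_toVec hl
  rw [hl_col, toVec_apply_zero]
  exact_mod_cast (le_max_left _ _).trans (hpot 0)

lemma exists_column_eq_run_toVec (w : List (Fin 4)) :
    ∃ l : List GaussianInt, (∀ d ∈ l, d ∈ gD) ∧ gweight l = w.length ∧
      ∃ k, column l = (init.run w).toVec k := by
  induction w using List.reverseRecOn with
  | nil => exact ⟨[], by simp, rfl, 0, column_nil⟩
  | append_singleton w t ih =>
    obtain ⟨l, hl, hl_weight, k, hl_col⟩ := ih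
    refine ⟨unitDigit (k + t) :: l, List.forall_mem_cons.2 ⟨unitDigit_mem_gD _, hl⟩, ?_, k + t, ?_⟩
    · rw [gweight_unitDigit_cons, hl_weight, List.length_append, List.length_singleton]
    · rw [column_cons, hl_col, Amat_unitDigit_mulVec_toVec, add_sub_cancel_left,
        run_append_singleton]

/-- `Max(N) = r_N`: the maximum of `e A_{d_1} ⋯ A_{d_n} eᵀ` over all digit
sequences from `D` with exactly `N` nonzero terms is `r_N`. -/
theorem stmt7 (N : ℕ) :
    (∀ l : List GaussianInt, (∀ d ∈ l, d ∈ gD) → gweight l = N →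
      (e9 * (l.map Amat).prod * e9ᵀ) 0 0 ≤ (rseq N : ℤ)) ∧
    (∃ l : List GaussianInt, (∀ d ∈ l, d ∈ gD) ∧ gweight l = N ∧
      (e9 * (l.map Amat).prod * e9ᵀ) 0 0 = (rseq N : ℤ)) := by
  simp only [e9_mul_prod_mul_transpose]
  constructor
  · rintro l hl rfl
    exact column_apply_zero_le hl
  · obtain ⟨w, hw, hx⟩ := exists_run_init_x_eq_rseq N
    obtain ⟨l, hl, hl_weight, k, hl_col⟩ := exists_column_eq_run_toVec w
    exact ⟨l, hl, hl_weight.trans hw, by rw [hl_col, toVec_apply_zero, hx]⟩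
end
end
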